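/- Let G=(V,E) be a Bonnet-Myers sharp graph of diameter 2 and let x,y∈V with x∼y and d_x=d_y. Then there exists at most one vertex x'∈V∖{x,y} with x∼x' and y≁x'. Furthermore, if such an x' exists, then there exists y'∈V∖{x,y} with y∼y', x≁y' and x'∼y'. -/

import Mathlib

open scoped Classical
open Finset

noncomputable section

/-- The degree of a vertex `x` in the graph `G`. -/
def deg {V : Type*} [Fintype V] (G : SimpleGraph V) (x : V) : ℕ :=
  (Finset.univ.filter (fun y => G.Adj x y)).card

/-- The diameter of `G`: the maximum of the combinatorial distance over all pairs of vertices. -/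
def diam {V : Type*} [Fintype V] (G : SimpleGraph V) : ℕ :=
  Finset.univ.sup (fun xy : V × V => G.dist xy.1 xy.2)

/-- The probability measure `μ_x^p` of the lazy simple random walk at `x` with idleness `p`. -/
def mu {V : Type*} [Fintype V] (G : SimpleGraph V) (p : ℝ) (x : V) : V → ℝ :=
  fun z => if z = x then p else if G.Adj x z then (1 - p) / (deg G x : ℝ) else 0

/-- The Wasserstein distance `W₁(μ₁, μ₂)` with respect to the combinatorial distance of `G`:
the infimum of the total transport cost over all transport plans from `μ₁` to `μ₂`. -/
def W1 {V : Type*} [Fintype V] (G : SimpleGraph V) (μ₁ μ₂ : V → ℝ) : ℝ :=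
  sInf {c : ℝ | ∃ π : V → V → ℝ,
    (∀ x y, 0 ≤ π x y ∧ π x y ≤ 1) ∧
    (∀ x, ∑ y, π x y = μ₁ x) ∧
    (∀ y, ∑ x, π x y = μ₂ y) ∧
    c = ∑ x, ∑ y, (G.dist x y : ℝ) * π x y}

/-- The `p`-Ollivier-Ricci curvature `κ_p(x,y) = 1 - W₁(μ_x^p, μ_y^p)`. -/
def kappa {V : Type*} [Fintype V] (G : SimpleGraph V) (p : ℝ) (x y : V) : ℝ :=
  1 - W1 G (mu G p x) (mu G p y)

/-- The Lin-Lu-Yau curvature `κ_LLY(x,y) = lim_{p→1} κ_p(x,y)/(1-p)`. -/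
def kappaLLY {V : Type*} [Fintype V] (G : SimpleGraph V) (x y : V) : ℝ :=
  Filter.limUnder (nhdsWithin 1 (Set.Iio 1)) (fun p => kappa G p x y / (1 - p))

/-- `G` is Bonnet-Myers sharp if the infimum of `κ_LLY` over the edges equals `2/diam(G)`. -/
def BMSharp {V : Type*} [Fintype V] (G : SimpleGraph V) : Prop :=
  sInf {r : ℝ | ∃ x y, G.Adj x y ∧ r = kappaLLY G x y} = 2 / (diam G : ℝ)

/-- `G` is obtained from the complete graph on its vertex set by deleting a matching
(a set of pairwise disjoint edges, encoded as a symmetric irreflexive relation in which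
every vertex has at most one partner). -/
def IsMatchingDeletionOfComplete {V : Type*} (G : SimpleGraph V) : Prop :=
  ∃ M : V → V → Prop, Symmetric M ∧ (∀ x, ¬ M x x) ∧
    (∀ x y z, M x y → M x z → y = z) ∧
    (∀ x y, G.Adj x y ↔ x ≠ y ∧ ¬ M x y)

/-- The graph `G(a,b)` on `2a+b` vertices `u_1, …, u_{2a}, v_1, …, v_b` (encoded as
`Fin (2a+b)`, with `u_i` the index `i-1` and `v_j` the index `2a+j-1`), in which two distinct
vertices are adjacent unless they form a pair `{u_{2i-1}, u_{2i}}`, i.e. `G(a,b)` is the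
complete graph `K_{2a+b}` with a matching of size `a` deleted. -/
def Gab (a b : ℕ) : SimpleGraph (Fin (2*a+b)) where
  Adj x y := x ≠ y ∧ ¬((x : ℕ) < 2*a ∧ (y : ℕ) < 2*a ∧ (x : ℕ)/2 = (y : ℕ)/2)
  symm := by
    constructor
    intro x y h
    exact ⟨h.1.symm, fun hc => h.2 ⟨hc.2.1, hc.1, hc.2.2.symm⟩⟩
  loopless := by constructor; intro x h; exact h.1 rfl

/-- The antitree `AT(a_1, …, a_N)` on the disjoint union of sets `V_1, …, V_N` with
`|V_k| = a_k` (0-indexed here: `V_k` is `Fin (a k)` for `k : Fin N`): two distinct vertices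
are adjacent iff they lie in the same set or in consecutive sets. -/
def antitree (N : ℕ) (a : Fin N → ℕ) : SimpleGraph (Σ k : Fin N, Fin (a k)) where
  Adj x y := x ≠ y ∧
    ((x.1 : ℕ) = (y.1 : ℕ) ∨ (x.1 : ℕ) + 1 = (y.1 : ℕ) ∨ (y.1 : ℕ) + 1 = (x.1 : ℕ))
  symm := by
    constructor
    intro x y h
    refine ⟨h.1.symm, ?_⟩
    rcases h.2 with h2 | h2 | h2
    · exact Or.inl h2.symm
    · exact Or.inr (Or.inr h2)
    · exact Or.inr (Or.inl h2)
  loopless := by constructor; intro x h; exact h.1 rfl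

lemma sum_mu {V : Type*} [Fintype V] (G : SimpleGraph V) (p : ℝ) (x : V) (f : V → ℝ) :
    ∑ z, f z * mu G p x z
      = p * f x + (1 - p) / (deg G x : ℝ) * ∑ z ∈ univ.filter (fun z => G.Adj x z), f z := by
  have h : ∀ z, f z * mu G p x z = (if z = x then p * f z else 0)
      + (1 - p) / (deg G x : ℝ) * (if G.Adj x z then f z else 0) := by
    intro z
    unfold mu
    by_cases hz : z = x
    · subst hz; simp [mul_comm]
    · by_cases ha : G.Adj x z <;> simp [hz, ha, mul_comm]
  simp_rw [h]
  rw [sum_add_distrib, ← mul_sum, sum_filter]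
  simp

lemma sum_mu_one {V : Type*} [Fintype V] (G : SimpleGraph V) (p : ℝ) (x : V)
    (hd : 0 < deg G x) : ∑ z, mu G p x z = 1 := by
  have h := sum_mu G p x (fun _ => 1)
  have hd' : (deg G x : ℝ) ≠ 0 := by positivity
  simp only [one_mul, sum_const, nsmul_eq_mul, mul_one] at h
  rw [h]
  change p + (1 - p) / (deg G x : ℝ) * (deg G x : ℝ) = 1
  field_simp
  ring

lemma mu_nonneg {V : Type*} [Fintype V] (G : SimpleGraph V) (p : ℝ) (x z : V)
    (hp : 0 < p) (hp1 : p < 1) : 0 ≤ mu G p x z := by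
  unfold mu
  have : 0 ≤ 1 - p := by linarith
  split_ifs <;> positivity

def plans {V : Type*} [Fintype V] (G : SimpleGraph V) (μ₁ μ₂ : V → ℝ) : Set ℝ :=
  {c : ℝ | ∃ π : V → V → ℝ,
    (∀ x y, 0 ≤ π x y ∧ π x y ≤ 1) ∧
    (∀ x, ∑ y, π x y = μ₁ x) ∧
    (∀ y, ∑ x, π x y = μ₂ y) ∧
    c = ∑ x, ∑ y, (G.dist x y : ℝ) * π x y}

lemma plans_nonempty {V : Type*} [Fintype V] (G : SimpleGraph V) (μ₁ μ₂ : V → ℝ)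
    (h1 : ∀ z, 0 ≤ μ₁ z) (h2 : ∀ z, 0 ≤ μ₂ z) (s1 : ∑ z, μ₁ z = 1) (s2 : ∑ z, μ₂ z = 1) :
    (plans G μ₁ μ₂).Nonempty := by
  refine ⟨_, fun a b => μ₁ a * μ₂ b, ?_, ?_, ?_, rfl⟩
  · intro a b
    refine ⟨mul_nonneg (h1 a) (h2 b), mul_le_one₀ ?_ (h2 b) ?_⟩
    · rw [← s1]; exact single_le_sum (fun i _ => h1 i) (mem_univ a)
    · rw [← s2]; exact single_le_sum (fun i _ => h2 i) (mem_univ b)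
  · intro a; rw [← mul_sum, s2, mul_one]
  · intro b; rw [← sum_mul, s1, one_mul]

lemma dual_le {V : Type*} [Fintype V] (G : SimpleGraph V) (μ₁ μ₂ : V → ℝ) (f : V → ℝ)
    (hf : ∀ a b, f a - f b ≤ G.dist a b) (c : ℝ) (hc : c ∈ plans G μ₁ μ₂) :
    ∑ z, f z * μ₁ z - ∑ z, f z * μ₂ z ≤ c := by
  obtain ⟨π, h0, h1, h2, rfl⟩ := hc
  have e1 : ∑ z, f z * μ₁ z = ∑ a, ∑ b, f a * π a b := by
    refine sum_congr rfl fun a _ => ?_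
    rw [← h1, mul_sum]
  have e2 : ∑ z, f z * μ₂ z = ∑ a, ∑ b, f b * π a b := by
    rw [sum_comm]
    refine sum_congr rfl fun a _ => ?_
    rw [← h2, mul_sum]
  rw [e1, e2, ← sum_sub_distrib]
  refine sum_le_sum fun a _ => ?_
  rw [← sum_sub_distrib]
  refine sum_le_sum fun b _ => ?_
  rw [← sub_mul]
  exact mul_le_mul_of_nonneg_right (hf a b) (h0 a b).1

lemma plans_bdd {V : Type*} [Fintype V] (G : SimpleGraph V) (μ₁ μ₂ : V → ℝ) :
    BddBelow (plans G μ₁ μ₂) := by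
  refine ⟨0, fun c hc => ?_⟩
  have := dual_le G μ₁ μ₂ (fun _ => 0) (by intro a b; simp) c hc
  simpa using this

lemma mu_convex {V : Type*} [Fintype V] (G : SimpleGraph V) (p t : ℝ) (x z : V) :
    mu G (1 - t * (1 - p)) x z = t * mu G p x z + (1 - t) * (if z = x then 1 else 0) := by
  unfold mu
  split_ifs <;> ring

lemma plan_step {V : Type*} [Fintype V] (G : SimpleGraph V) (p t : ℝ) (x y : V)
    (hxy : G.Adj x y) (ht : 0 ≤ t) (ht1 : t ≤ 1) (c : ℝ)
    (hc : c ∈ plans G (mu G p x) (mu G p y)) :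
    t * c + (1 - t) ∈ plans G (mu G (1 - t * (1 - p)) x) (mu G (1 - t * (1 - p)) y) := by
  obtain ⟨π, h0, h1, h2, rfl⟩ := hc
  have ht2 : 0 ≤ 1 - t := by linarith
  refine ⟨fun a b => t * π a b + (1 - t) * (if a = x then if b = y then 1 else 0 else 0),
    ?_, ?_, ?_, ?_⟩
  · intro a b
    have := h0 a b
    dsimp only
    have e : (0:ℝ) ≤ (if a = x then if b = y then 1 else 0 else 0) ∧
      (if a = x then if b = y then 1 else 0 else 0) ≤ (1:ℝ) := by split_ifs <;> simp
    constructor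
    · have := mul_nonneg ht this.1
      have := mul_nonneg ht2 e.1
      linarith
    · have := mul_le_mul_of_nonneg_left this.2 ht
      have := mul_le_mul_of_nonneg_left e.2 ht2
      linarith
  · intro a
    rw [mu_convex, sum_add_distrib, ← mul_sum, ← mul_sum, h1]
    by_cases ha : a = x <;> simp [ha]
  · intro b
    rw [mu_convex, sum_add_distrib, ← mul_sum, ← mul_sum, h2]
    by_cases hb : b = y <;> simp [hb]
  · have hd : G.dist x y = 1 := SimpleGraph.dist_eq_one_iff_adj.mpr hxy
    have e : ∀ a b, (G.dist a b : ℝ) * (t * π a b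
        + (1 - t) * (if a = x then if b = y then 1 else 0 else 0))
        = t * ((G.dist a b : ℝ) * π a b)
        + (if a = x then if b = y then (1 - t) * (G.dist a b : ℝ) else 0 else 0) := by
      intro a b
      split_ifs <;> ring
    simp_rw [e, sum_add_distrib, ← mul_sum]
    simp [hd]

lemma kappaLLY_le {V : Type*} [Fintype V] (G : SimpleGraph V) (x y : V) (hxy : G.Adj x y)
    (hx : 0 < deg G x) (hy : 0 < deg G y) (C : ℝ)
    (hC : ∀ p, 0 < p → p < 1 → kappa G p x y / (1 - p) ≤ C) : kappaLLY G x y ≤ C := by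
  have hne : ∀ p, 0 < p → p < 1 → (plans G (mu G p x) (mu G p y)).Nonempty := fun p h0 h1 =>
    plans_nonempty G _ _ (fun z => mu_nonneg G p x z h0 h1) (fun z => mu_nonneg G p y z h0 h1)
      (sum_mu_one G p x hx) (sum_mu_one G p y hy)
  have hmono : MonotoneOn (fun p => kappa G p x y / (1 - p)) (Set.Ioo 0 1) := by
    intro p hp q hq hpq
    have hp' : 0 < 1 - p := by linarith [hp.2]
    have hq' : 0 < 1 - q := by linarith [hq.2]
    obtain ⟨t, ht⟩ : ∃ t, t = (1 - q) / (1 - p) := ⟨_, rfl⟩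
    have ht0 : 0 < t := by rw [ht]; positivity
    have ht1 : t ≤ 1 := by rw [ht, div_le_one hp']; linarith
    have hqt : q = 1 - t * (1 - p) := by rw [ht]; field_simp; ring
    have key : (W1 G (mu G q x) (mu G q y) - (1 - t)) / t ≤ W1 G (mu G p x) (mu G p y) := by
      refine le_csInf (hne p hp.1 hp.2) fun c hc => ?_
      rw [div_le_iff₀ ht0]
      have h := plan_step G p t x y hxy ht0.le ht1 c hc
      rw [← hqt] at h
      have := csInf_le (plans_bdd G _ _) h
      change W1 G (mu G q x) (mu G q y) ≤ _ at this
      linarith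
    rw [div_le_iff₀ ht0] at key
    dsimp only
    unfold kappa
    rw [div_le_div_iff₀ hp' hq']
    have e : 1 - q = t * (1 - p) := by linarith
    rw [e]
    nlinarith
  have hbdd : BddAbove ((fun p => kappa G p x y / (1 - p)) '' Set.Ioo 0 1) := by
    refine ⟨C, ?_⟩
    rintro _ ⟨p, hp, rfl⟩
    exact hC p hp.1 hp.2
  have hlim := hmono.tendsto_nhdsWithin_Ioo_left (by simp) hbdd
  rw [kappaLLY, hlim.limUnder_eq]
  refine csSup_le ⟨_, (1/2 : ℝ), ⟨by norm_num, by norm_num⟩, rfl⟩ ?_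
  · rintro _ ⟨p, hp, rfl⟩
    exact hC p hp.1 hp.2

lemma kappaLLY_le_dual {V : Type*} [Fintype V] (G : SimpleGraph V) (x y : V) (hxy : G.Adj x y)
    (hdeg : deg G x = deg G y) (hx : 0 < deg G x) (f : V → ℝ)
    (hf : ∀ a b, f a - f b ≤ G.dist a b) (hfx : f x - f y = 1) (D : ℝ)
    (hD : ∑ z ∈ univ.filter (fun z => G.Adj x z), f z
      - ∑ z ∈ univ.filter (fun z => G.Adj y z), f z = D) :
    kappaLLY G x y ≤ 1 - D / deg G x := by
  refine kappaLLY_le G x y hxy hx (hdeg ▸ hx) _ fun p h0 h1 => ?_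
  have hW : p + (1 - p) / deg G x * D ≤ W1 G (mu G p x) (mu G p y) := by
    refine le_csInf (plans_nonempty G _ _ (fun z => mu_nonneg G p x z h0 h1)
      (fun z => mu_nonneg G p y z h0 h1)
      (sum_mu_one G p x hx) (sum_mu_one G p y (hdeg ▸ hx))) fun c hc => ?_
    have := dual_le G _ _ f hf c hc
    rw [sum_mu, sum_mu, ← hdeg] at this
    have hfx' : f x = f y + 1 := by linarith
    rw [← hD]
    rw [hfx'] at this
    linarith
  have hp : 0 < 1 - p := by linarith
  rw [div_le_iff₀ hp]
  unfold kappa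
  have : (1 - D / deg G x) * (1 - p) = 1 - p - (1 - p) / deg G x * D := by ring
  linarith

lemma one_le_kappaLLY {V : Type*} [Fintype V] (G : SimpleGraph V)
    (hdiam : diam G = 2) (hBM : BMSharp G) (x y : V) (hxy : G.Adj x y) :
    1 ≤ kappaLLY G x y := by
  unfold BMSharp at hBM
  rw [hdiam] at hBM
  have hfin : {r : ℝ | ∃ x y, G.Adj x y ∧ r = kappaLLY G x y}.Finite := by
    refine (Set.finite_range (fun q : V × V => kappaLLY G q.1 q.2)).subset ?_
    rintro r ⟨a, b, _, rfl⟩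
    exact ⟨(a, b), rfl⟩
  have := csInf_le hfin.bddBelow (show kappaLLY G x y ∈ _ from ⟨x, y, hxy, rfl⟩)
  rw [hBM] at this
  norm_num at this
  exact this

lemma card_key {V : Type*} [Fintype V] (G : SimpleGraph V) (hconn : G.Connected)
    (hdiam : diam G = 2) (hBM : BMSharp G) (x y : V) (hxy : G.Adj x y)
    (hdeg : deg G x = deg G y) (A B S : Finset V)
    (hA : ∀ z, z ∈ A ↔ z ≠ y ∧ G.Adj x z ∧ ¬ G.Adj y z)
    (hB : ∀ z, z ∈ B ↔ z ≠ x ∧ G.Adj y z ∧ ¬ G.Adj x z)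
    (hS : ∀ z, z ∈ S ↔ z ∈ B ∧ ∀ a ∈ A, ¬ G.Adj a z) :
    A.card + S.card ≤ 1 ∧ A.card = B.card := by
  have hx : 0 < deg G x := card_pos.mpr ⟨y, by simpa using hxy⟩
  have hyx := hxy.symm
  have hne : x ≠ y := hxy.ne
  constructor
  · obtain ⟨f, hfd⟩ : ∃ f : V → ℝ, f = fun z => (if z = x then 1 else 0)
      + (if z ∈ A then 1 else 0) - (if z ∈ S then 1 else 0) := ⟨_, rfl⟩
    have hxA : x ∉ A := by simp [hA]
    have hyA : y ∉ A := by simp [hA]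
    have hxS : x ∉ S := by simp [hS, hB]
    have hyS : y ∉ S := by simp [hS, hB]
    have hAS : ∀ z, z ∈ A → z ∉ S := by
      intro z h1 h2
      rw [hS, hB] at h2; rw [hA] at h1; tauto
    have hf : ∀ a b, f a - f b ≤ G.dist a b := by
      intro a b
      by_cases hab : a = b
      · subst hab; simp
      have hd1 : (1:ℝ) ≤ G.dist a b := by
        exact_mod_cast hconn.pos_dist_of_ne hab
      by_cases hadj : G.Adj a b
      · have hdis : (a = x ∨ a ∈ A) → b ∉ S := by
          rintro (h | h) hb
          · subst h
            rw [hS, hB] at hb; tauto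
          · exact ((hS b).1 hb).2 a h hadj
        have hu : f a ≤ 1 := by
          subst hfd; dsimp only
          by_cases h1 : a = x
          · subst h1; simp [hxA, hxS]
          · simp only [h1, if_false]; split_ifs <;> norm_num
        have hl : ∀ c, c ∉ S → 0 ≤ f c := by
          intro c hc
          subst hfd; dsimp only
          simp only [hc, if_false]; split_ifs <;> norm_num
        have hl' : ∀ c, -1 ≤ f c := by
          intro c
          subst hfd; dsimp only
          split_ifs <;> norm_num
        by_cases h : a = x ∨ a ∈ A
        · linarith [hl b (hdis h)]
        · have : f a ≤ 0 := by
            push Not at h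
            subst hfd; dsimp only
            simp only [h.1, h.2, if_false]; split_ifs <;> norm_num
          linarith [hl' b]
      · have hd2 : (2:ℝ) ≤ G.dist a b := by
          have h1 := hconn.pos_dist_of_ne hab
          have h2 : G.dist a b ≠ 1 := fun h => hadj (SimpleGraph.dist_eq_one_iff_adj.mp h)
          exact_mod_cast (by omega : 2 ≤ G.dist a b)
        have hu : f a ≤ 1 := by
          subst hfd; dsimp only
          by_cases h1 : a = x
          · subst h1; simp [hxA, hxS]
          · simp only [h1, if_false]; split_ifs <;> norm_num
        have hl' : -1 ≤ f b := by
          subst hfd; dsimp only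
          split_ifs <;> norm_num
        linarith
    have hfx : f x - f y = 1 := by
      subst hfd; simp [hxA, hyA, hxS, hyS, hne.symm]
    have hD : ∑ z ∈ univ.filter (fun z => G.Adj x z), f z
      - ∑ z ∈ univ.filter (fun z => G.Adj y z), f z = (A.card : ℝ) + S.card - 1 := by
      rw [sum_filter, sum_filter, ← sum_sub_distrib]
      have e : ∀ z, (if G.Adj x z then f z else 0) - (if G.Adj y z then f z else 0)
          = (if z ∈ A then 1 else 0) + (if z ∈ S then 1 else 0) - (if z = x then 1 else 0) := by
        intro z
        subst hfd; dsimp only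
        by_cases h1 : z = x
        · subst h1; simp [hxA, hxS, hyx]
        by_cases h2 : z ∈ A
        · have h3 := hAS z h2
          have h4 := (hA z).1 h2
          simp [h1, h2, h3, h4]
        by_cases h3 : z ∈ S
        · have h4 := (hB z).1 ((hS z).1 h3).1
          simp [h2, h3, h4]
        · simp [h1, h2, h3]
      simp_rw [e, sum_sub_distrib, sum_add_distrib]
      simp
    have h1 := kappaLLY_le_dual G x y hxy hdeg hx f hf hfx _ hD
    have h2 := one_le_kappaLLY G hdiam hBM x y hxy
    have hdp : (0:ℝ) < deg G x := by exact_mod_cast hx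
    have h3 : ((A.card : ℝ) + S.card - 1) / deg G x ≤ 0 := by linarith
    rw [div_le_iff₀ hdp] at h3
    have : (A.card : ℝ) + S.card ≤ 1 := by linarith
    exact_mod_cast this
  · have e1 : A = (univ.filter (fun z => G.Adj x z) \ univ.filter (fun z => G.Adj y z)).erase y := by
      ext z; simp [hA]
    have e2 : B = (univ.filter (fun z => G.Adj y z) \ univ.filter (fun z => G.Adj x z)).erase x := by
      ext z; simp [hB]
    rw [e1, e2, card_erase_of_mem (by simp [hxy]), card_erase_of_mem (by simp [hyx])]
    congr 1
    exact card_sdiff_comm hdeg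

/-- In a Bonnet-Myers sharp graph of diameter 2, if `x ∼ y` and `d_x = d_y`,
there is at most one vertex `x' ∉ {x,y}` with `x ∼ x'` and `y ≁ x'`; moreover for any such `x'`
there is `y' ∉ {x,y}` with `y ∼ y'`, `x ≁ y'` and `x' ∼ y'`. -/
theorem stmt6 {V : Type*} [Fintype V] (G : SimpleGraph V) (hconn : G.Connected)
    (hdiam : diam G = 2) (hBM : BMSharp G) (x y : V) (hxy : G.Adj x y)
    (hdeg : deg G x = deg G y) :
    (∀ x₁ x₂ : V,
        (x₁ ≠ x ∧ x₁ ≠ y ∧ G.Adj x x₁ ∧ ¬ G.Adj y x₁) →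
        (x₂ ≠ x ∧ x₂ ≠ y ∧ G.Adj x x₂ ∧ ¬ G.Adj y x₂) → x₁ = x₂) ∧
    (∀ x' : V, (x' ≠ x ∧ x' ≠ y ∧ G.Adj x x' ∧ ¬ G.Adj y x') →
        ∃ y' : V, y' ≠ x ∧ y' ≠ y ∧ G.Adj y y' ∧ ¬ G.Adj x y' ∧ G.Adj x' y') := by
  obtain ⟨A, hA⟩ : ∃ A : Finset V, ∀ z, z ∈ A ↔ z ≠ y ∧ G.Adj x z ∧ ¬ G.Adj y z :=
    ⟨univ.filter (fun z => z ≠ y ∧ G.Adj x z ∧ ¬ G.Adj y z), by simp⟩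
  obtain ⟨B, hB⟩ : ∃ B : Finset V, ∀ z, z ∈ B ↔ z ≠ x ∧ G.Adj y z ∧ ¬ G.Adj x z :=
    ⟨univ.filter (fun z => z ≠ x ∧ G.Adj y z ∧ ¬ G.Adj x z), by simp⟩
  obtain ⟨S, hS⟩ : ∃ S : Finset V, ∀ z, z ∈ S ↔ z ∈ B ∧ ∀ a ∈ A, ¬ G.Adj a z :=
    ⟨univ.filter (fun z => z ∈ B ∧ ∀ a ∈ A, ¬ G.Adj a z), by simp⟩
  obtain ⟨h1, h2⟩ := card_key G hconn hdiam hBM x y hxy hdeg A B S hA hB hS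
  have huniq : ∀ a ∈ A, ∀ b ∈ A, a = b := card_le_one.mp (by omega)
  refine ⟨fun x₁ x₂ g1 g2 => huniq _ ((hA _).2 g1.2) _ ((hA _).2 g2.2), fun x' g => ?_⟩
  have hx'A := (hA _).2 g.2
  have hpos : 0 < A.card := card_pos.mpr ⟨_, hx'A⟩
  have hS0 : S = ∅ := card_eq_zero.mp (by omega)
  obtain ⟨b, hb⟩ := card_pos.mp (h2 ▸ hpos)
  have hbS : b ∉ S := by simp [hS0]
  rw [hS] at hbS
  push Not at hbS
  obtain ⟨a, ha, hab⟩ := hbS hb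
  obtain rfl := huniq _ ha _ hx'A
  have hb' := (hB b).1 hb
  exact ⟨b, hb'.1, hb'.2.1.ne', hb'.2.1, hb'.2.2, hab⟩
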